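/- Let b : M → ℝ be a family of coefficients indexed by multi-indices, let q ∈ ℕ, and assume A² := ∑_{α∈M} b_α² (2ℕ)^{−qα} < ∞. Let δ > 0 and let z : ℕ₊ → ℂ be a finitely supported sequence satisfying ∑_{α∈M, α≠0} |z^α|² (2ℕ)^{qα} ≤ δ². Then the series ∑_{α∈M} b_α z^α converges absolutely, and |∑_{α∈M} b_α z^α| ≤ |b₀| + A·δ, where b₀ is the coefficient at the zero multi-index. (Convergence of the Hermite transform of a Kondratiev distribution on the infinite-dimensional neighborhood B_q(δ).) -/

import Mathlib

/-!
Since `(2ℕ)^{-qα} (2ℕ)^{qα} = 1`, the weights can be split evenly,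
`|b_α z^α| = (|b_α| (2ℕ)^{-qα/2}) (|z^α| (2ℕ)^{qα/2})`, and the Cauchy–Schwarz inequality bounds
the sum over `α ≠ 0` by `A·δ`. The index `α = 0` is kept apart because `z^0 = 1` even when all
other `z^α` are small; it contributes `|b₀|`.
-/

open scoped BigOperators

/-- A multi-index: a finitely supported function `ℕ₊ → ℕ`. -/
abbrev MultiIndex := ℕ+ →₀ ℕ

/-- For a multi-index `α` and a real number `c`,
`(2ℕ)^{cα} = ∏_j (2j)^{c·α(j)}` (a finite product over the support of `α`). -/
noncomputable def twoNpow (c : ℝ) (α : MultiIndex) : ℝ :=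
  α.prod fun j n => (2 * (j : ℝ)) ^ (c * (n : ℝ))

/-- For a finitely supported sequence `z : ℕ₊ → ℂ` and a multi-index `α`,
`z^α = ∏_{j} z(j)^{α(j)}` (a finite product). -/
noncomputable def zpowM (z : ℕ+ →₀ ℂ) (α : MultiIndex) : ℂ :=
  α.prod fun j n => z j ^ n

section Sums

variable {ι : Type*}

theorem hasSum_add_of_hasSum_ne {M : Type*} [AddCommMonoid M] [TopologicalSpace M]
    [ContinuousAdd M] {f : ι → M} {i : ι} {s : M}
    (hf : HasSum (fun j : {j // j ≠ i} => f j) s) : HasSum f (f i + s) :=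
  (hasSum_unique fun j : ({i} : Set ι) => f j).add_compl hf

theorem summable_and_tsum_sqrt_mul_sqrt_le {f g : ι → ℝ} (hf₀ : ∀ i, 0 ≤ f i)
    (hg₀ : ∀ i, 0 ≤ g i) (hf : Summable f) (hg : Summable g) :
    (Summable fun i => √(f i) * √(g i)) ∧
      ∑' i, √(f i) * √(g i) ≤ √(∑' i, f i) * √(∑' i, g i) := by
  simpa [Real.sq_sqrt, hf₀, hg₀, hf, hg, ← Real.sqrt_eq_rpow, -one_div] using
    Real.summable_and_inner_le_Lp_mul_Lq_tsum_of_nonneg Real.HolderConjugate.two_two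
      (fun i => Real.sqrt_nonneg (f i)) (fun i => Real.sqrt_nonneg (g i))

theorem summable_and_tsum_mul_le_of_weight {u v w : ι → ℝ} (hu₀ : ∀ i, 0 ≤ u i)
    (hv₀ : ∀ i, 0 ≤ v i) (hw : ∀ i, 0 < w i) (hu : Summable fun i => u i ^ 2 * (w i)⁻¹)
    (hv : Summable fun i => v i ^ 2 * w i) :
    (Summable fun i => u i * v i) ∧
      ∑' i, u i * v i ≤ √(∑' i, u i ^ 2 * (w i)⁻¹) * √(∑' i, v i ^ 2 * w i) := by
  have hsplit (i : ι) : √(u i ^ 2 * (w i)⁻¹) * √(v i ^ 2 * w i) = u i * v i := by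
    have hwi := hw i
    rw [← Real.sqrt_mul (by positivity),
      show u i ^ 2 * (w i)⁻¹ * (v i ^ 2 * w i) = (u i * v i) ^ 2 by field_simp,
      Real.sqrt_sq (mul_nonneg (hu₀ i) (hv₀ i))]
  simpa only [hsplit] using summable_and_tsum_sqrt_mul_sqrt_le
    (fun i => mul_nonneg (sq_nonneg (u i)) (inv_nonneg.2 (hw i).le))
    (fun i => mul_nonneg (sq_nonneg (v i)) (hw i).le) hu hv

end Sums

theorem twoNpow_pos (c : ℝ) (α : MultiIndex) : 0 < twoNpow c α :=
  Finset.prod_pos fun _ _ => by positivity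

theorem twoNpow_neg (c : ℝ) (α : MultiIndex) : twoNpow (-c) α = (twoNpow c α)⁻¹ := by
  simp only [twoNpow, Finsupp.prod, ← Finset.prod_inv_distrib, neg_mul]
  exact Finset.prod_congr rfl fun j _ => Real.rpow_neg (by positivity) _

theorem zpowM_zero (z : ℕ+ →₀ ℂ) : zpowM z 0 = 1 :=
  Finsupp.prod_zero_index

theorem hermite_transform_convergence_general {E : Type*} [NormedAddCommGroup E]
    [NormedSpace ℂ E] (b : MultiIndex → E) (q : ℝ)
    (hb : Summable fun α : MultiIndex => ‖b α‖ ^ 2 * twoNpow (-q) α)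
    (δ : ℝ) (hδ : 0 ≤ δ) (z : ℕ+ →₀ ℂ)
    (hzsum : Summable fun α : {α : MultiIndex // α ≠ 0} => ‖zpowM z α.1‖ ^ 2 * twoNpow q α.1)
    (hz : (∑' α : {α : MultiIndex // α ≠ 0}, ‖zpowM z α.1‖ ^ 2 * twoNpow q α.1) ≤ δ ^ 2) :
    (Summable fun α : MultiIndex => ‖zpowM z α • b α‖) ∧
      ∑' α : MultiIndex, ‖zpowM z α • b α‖
        ≤ ‖b 0‖ + √(∑' α : MultiIndex, ‖b α‖ ^ 2 * twoNpow (-q) α) * δ := by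
  have hb_le : ∑' α : {α : MultiIndex // α ≠ 0}, ‖b α.1‖ ^ 2 * twoNpow (-q) α.1
      ≤ ∑' α, ‖b α‖ ^ 2 * twoNpow (-q) α :=
    hb.tsum_subtype_le _ {α | α ≠ 0} fun α => mul_nonneg (sq_nonneg _) (twoNpow_pos (-q) α).le
  have hb_ne : Summable fun α : {α : MultiIndex // α ≠ 0} => ‖b α.1‖ ^ 2 * twoNpow (-q) α.1 :=
    hb.subtype {α | α ≠ 0}
  simp only [twoNpow_neg] at hb_le hb_ne ⊢
  obtain ⟨hsum, hle⟩ := summable_and_tsum_mul_le_of_weight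
    (u := fun α : {α : MultiIndex // α ≠ 0} => ‖b α.1‖) (w := fun α => twoNpow q α.1)
    (fun _ => norm_nonneg _) (fun _ => norm_nonneg _) (fun _ => twoNpow_pos q _) hb_ne hzsum
  have hsum_zero_add := hasSum_add_of_hasSum_ne (f := fun α => ‖b α‖ * ‖zpowM z α‖) hsum.hasSum
  simp only [zpowM_zero, norm_one, mul_one] at hsum_zero_add
  simp only [norm_smul, mul_comm ‖zpowM z _‖]
  refine ⟨hsum_zero_add.summable, ?_⟩
  rw [hsum_zero_add.tsum_eq]
  have hz_le : √(∑' α : {α : MultiIndex // α ≠ 0}, ‖zpowM z α.1‖ ^ 2 * twoNpow q α.1) ≤ δ :=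
    Real.sqrt_le_iff.2 ⟨hδ, hz⟩
  grw [hle, hb_le, hz_le]

/-- Convergence of the Hermite transform of a Kondratiev distribution on the
infinite-dimensional neighborhood `B_q(δ)`. -/
theorem hermite_transform_convergence
    (b : MultiIndex → ℝ) (q : ℕ)
    (hb : Summable fun α : MultiIndex => b α ^ 2 * twoNpow (-(q : ℝ)) α)
    (δ : ℝ) (hδ : 0 < δ) (z : ℕ+ →₀ ℂ)
    (hzsum : Summable fun α : {α : MultiIndex // α ≠ 0} =>
      ‖zpowM z α.1‖ ^ 2 * twoNpow (q : ℝ) α.1)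
    (hz : (∑' α : {α : MultiIndex // α ≠ 0},
      ‖zpowM z α.1‖ ^ 2 * twoNpow (q : ℝ) α.1) ≤ δ ^ 2) :
    (Summable fun α : MultiIndex => ‖(b α : ℂ) * zpowM z α‖) ∧
      ‖∑' α : MultiIndex, (b α : ℂ) * zpowM z α‖
        ≤ |b 0| + Real.sqrt (∑' α : MultiIndex, b α ^ 2 * twoNpow (-(q : ℝ)) α) * δ := by
  obtain ⟨hsum, hle⟩ := hermite_transform_convergence_general (fun α => (b α : ℂ)) q
    (by simpa using hb) δ hδ.le z hzsum hz
  simp only [smul_eq_mul, mul_comm (zpowM z _), Complex.norm_real, Real.norm_eq_abs, sq_abs]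
    at hsum hle
  exact ⟨hsum, (norm_tsum_le_tsum_norm hsum).trans hle⟩
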